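/- Let n ≥ 2 and b ∈ ℝ, and let L ⊆ ℝⁿ be the hyperplane parameterized by f(x₁,…,x_{n−1}) = (x₁,…,x_{n−1}, b). Then ω×(L) = max{n, n·σ(b)}. -/

import Mathlib

open Filter MeasureTheory Metric Set BigOperators

/-- Π×(q) = ∏_{i : qᵢ ≠ 0} |qᵢ| (empty product = 1). -/
noncomputable def prodTimes {n : ℕ} (q : Fin n → ℤ) : ℝ :=
  ∏ i, if q i = 0 then 1 else |(q i : ℝ)|

/-- Multiplicative Diophantine exponent ω×(y): the sup (in the extended reals) of all
v ∈ ℝ such that there are infinitely many q ∈ ℤⁿ with |q·y + p| < Π×(q)^{-v/n}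
for some p ∈ ℤ. -/
noncomputable def omegaT {n : ℕ} (y : Fin n → ℝ) : EReal :=
  sSup {w : EReal | ∃ v : ℝ, w = (v : EReal) ∧
    {q : Fin n → ℤ | ∃ p : ℤ, |(∑ i, (q i : ℝ) * y i) + (p : ℝ)| <
      (prodTimes q) ^ (-(v / (n : ℝ)))}.Infinite}

/-- ω×(μ) for a measure: sup{v : μ{y : ω×(y) > v} > 0}. -/
noncomputable def omegaTMeas {n : ℕ} (μ : Measure (Fin n → ℝ)) : EReal :=
  sSup {w : EReal | ∃ v : ℝ, w = (v : EReal) ∧ 0 < μ {y | (v : EReal) < omegaT y}}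

/-- σ(b) for a scalar b. -/
noncomputable def sigma1 (b : ℝ) : EReal :=
  sSup {w : EReal | ∃ v : ℝ, w = (v : EReal) ∧
    {q : ℤ | ∃ p : ℤ, |(q : ℝ) * b + (p : ℝ)| < |(q : ℝ)| ^ (-v)}.Infinite}

theorem volume_Icc_inter_near_int_le {N δ : ℝ} (hN : 0 ≤ N) (hδ : 0 ≤ δ) (hδ1 : δ ≤ 1)
    {k : ℤ} (hk : k ≠ 0) (c : ℝ) :
    (volume.restrict (Icc (-N) N)) {t : ℝ | ∃ p : ℤ, |(k : ℝ) * t + c + p| < δ}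
      ≤ ENNReal.ofReal ((4 * N + 6) * δ) := by
  have hk1 : (1 : ℝ) ≤ |(k : ℝ)| := by exact_mod_cast Int.one_le_abs hk
  have hk0 : (0 : ℝ) < |(k : ℝ)| := by linarith
  have hkne : (k : ℝ) ≠ 0 := by exact_mod_cast hk
  rw [Measure.restrict_apply' measurableSet_Icc]
  set R : ℝ := |(k : ℝ)| * N + 1
  have hR : 1 ≤ R := le_add_of_nonneg_left (by positivity)
  have hsub : {t : ℝ | ∃ p : ℤ, |(k : ℝ) * t + c + p| < δ} ∩ Icc (-N) N
      ⊆ ⋃ p ∈ Finset.Icc ⌈-c - R⌉ ⌊-c + R⌋, ball ((-c - (p : ℝ)) / k) (δ / |(k : ℝ)|) := by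
    rintro t ⟨⟨p, hp⟩, ht⟩
    have hkt : |(k : ℝ) * t| ≤ |(k : ℝ)| * N := by
      rw [abs_mul]
      exact mul_le_mul_of_nonneg_left (abs_le.2 ht) hk0.le
    have h1 := abs_lt.1 hp
    have h2 := abs_le.1 hkt
    simp only [mem_iUnion, Finset.mem_Icc, exists_prop]
    refine ⟨p, ⟨Int.ceil_le.2 ?_, Int.le_floor.2 ?_⟩, ?_⟩
    · simp only [R]; linarith
    · simp only [R]; linarith
    · rw [mem_ball, Real.dist_eq, lt_div_iff₀ hk0, ← abs_mul]
      have : (t - (-c - (p : ℝ)) / k) * k = k * t + c + p := by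
        rw [sub_mul, div_mul_cancel₀ _ hkne]
        ring
      rwa [this]
  have hcard : ((Finset.Icc ⌈-c - R⌉ ⌊-c + R⌋).card : ℝ) ≤ 2 * R + 1 := by
    rw [Int.card_Icc]
    have h1 := Int.le_ceil (-c - R)
    have h2 := Int.floor_le (-c + R)
    have h3 : (((⌊-c + R⌋ + 1 - ⌈-c - R⌉).toNat : ℤ) : ℝ) ≤ 2 * R + 1 := by
      rw [Int.toNat_eq_max]
      push_cast
      exact max_le (by linarith) (by linarith)
    exact_mod_cast h3
  calc _ ≤ _ := measure_mono hsub
    _ ≤ ∑ p ∈ Finset.Icc ⌈-c - R⌉ ⌊-c + R⌋,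
        volume (ball ((-c - (p : ℝ)) / k) (δ / |(k : ℝ)|)) := measure_biUnion_finset_le _ _
    _ = ENNReal.ofReal ((Finset.Icc ⌈-c - R⌉ ⌊-c + R⌋).card * (2 * (δ / |(k : ℝ)|))) := by
        simp [Real.volume_ball, ENNReal.ofReal_mul]
    _ ≤ _ := by
        refine ENNReal.ofReal_le_ofReal ?_
        calc _ ≤ (2 * R + 1) * (2 * (δ / |(k : ℝ)|)) := by gcongr
          _ = (4 * N + 6 / |(k : ℝ)|) * δ := by simp only [R]; field_simp; ring
          _ ≤ _ := by
            gcongr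
            exact div_le_self (by norm_num) hk1

theorem pi_restrict_near_int_le {m : ℕ} {N δ : ℝ} (hN : 0 ≤ N) (hδ : 0 ≤ δ) (hδ1 : δ ≤ 1)
    {k : Fin m → ℤ} (hk : k ≠ 0) (c : ℝ) :
    (Measure.pi fun _ : Fin m => (volume : Measure ℝ).restrict (Icc (-N) N))
        {x | ∃ p : ℤ, |(∑ j, (k j : ℝ) * x j) + c + p| < δ}
      ≤ ENNReal.ofReal ((4 * N + 6) * δ) * ENNReal.ofReal (2 * N) ^ (m - 1) := by
  obtain ⟨i, hi⟩ := Function.ne_iff.1 hk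
  obtain _ | m := m
  · exact i.elim0
  set ν : Measure ℝ := volume.restrict (Icc (-N) N)
  set E : Set (Fin (m + 1) → ℝ) := {x | ∃ p : ℤ, |(∑ j, (k j : ℝ) * x j) + c + p| < δ}
  have hE : MeasurableSet E := by
    rw [show E = ⋃ p : ℤ, {x | |(∑ j, (k j : ℝ) * x j) + c + p| < δ} by ext; simp [E]]
    exact MeasurableSet.iUnion fun p => measurableSet_lt (by fun_prop) measurable_const
  have hmp := (measurePreserving_piFinSuccAbove (fun _ : Fin (m + 1) => ν) i).symm
  rw [← hmp.measure_preimage hE.nullMeasurableSet,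
    Measure.prod_apply_symm (hmp.measurable hE)]
  calc _ ≤ ∫⁻ _ : Fin m → ℝ, ENNReal.ofReal ((4 * N + 6) * δ) ∂(Measure.pi fun _ => ν) := by
        refine lintegral_mono fun y => ?_
        refine le_trans (measure_mono ?_) (volume_Icc_inter_near_int_le hN hδ hδ1 hi
          ((∑ j, (k (i.succAbove j) : ℝ) * y j) + c))
        rintro t ⟨p, hp⟩
        refine ⟨p, ?_⟩
        change |(∑ j, (k j : ℝ) * i.insertNth (α := fun _ => ℝ) t y j) + c + p| < δ at hp
        simpa [Fin.sum_univ_succAbove _ i, add_assoc] using hp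
    _ = _ := by
        rw [lintegral_const, Measure.pi_univ]
        simp [ν, two_mul]

theorem tsum_prod_pi_ne_top {α : Type*} {g : α → ENNReal} (hg : ∑' a, g a ≠ ⊤) (n : ℕ) :
    ∑' q : Fin n → α, ∏ i, g (q i) ≠ ⊤ := by
  induction n with
  | zero => simp
  | succ n ih =>
    rw [← (Fin.consEquiv fun _ : Fin (n + 1) => α).tsum_eq]
    simp only [Fin.prod_univ_succ, Fin.consEquiv_apply, Fin.cons_zero, Fin.cons_succ]
    rw [ENNReal.tsum_prod (f := fun a (q : Fin n → α) => g a * ∏ i, g (q i))]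
    simp only [ENNReal.tsum_mul_left, ENNReal.tsum_mul_right]
    exact ENNReal.mul_ne_top hg ih

theorem one_le_prodTimes {n : ℕ} (q : Fin n → ℤ) : 1 ≤ prodTimes q := by
  refine Finset.one_le_prod fun i _ => ?_
  split_ifs with h
  · exact le_rfl
  · exact_mod_cast Int.one_le_abs h

theorem ofReal_prodTimes_rpow {n : ℕ} (q : Fin n → ℤ) (s : ℝ) :
    ENNReal.ofReal (prodTimes q ^ (-s))
      = ∏ i, ENNReal.ofReal (if q i = 0 then 1 else |(q i : ℝ)| ^ (-s)) := by
  rw [← ENNReal.ofReal_prod_of_nonneg (fun i _ => by split_ifs <;> positivity), prodTimes,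
    ← Real.finsetProd_rpow _ _ (fun i _ => by split_ifs <;> positivity)]
  congr 1
  refine Finset.prod_congr rfl fun i _ => ?_
  split_ifs <;> simp

theorem tsum_ofReal_prodTimes_rpow_ne_top {s : ℝ} (hs : 1 < s) (n : ℕ) :
    ∑' q : Fin n → ℤ, ENNReal.ofReal (prodTimes q ^ (-s)) ≠ ⊤ := by
  simp only [ofReal_prodTimes_rpow]
  refine tsum_prod_pi_ne_top
    (g := fun k : ℤ => ENNReal.ofReal (if k = 0 then 1 else |(k : ℝ)| ^ (-s))) ?_ n
  refine Summable.tsum_ofReal_ne_top ?_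
  refine ((Real.summable_abs_int_rpow hs).add
    (summable_of_hasFiniteSupport (f := fun k : ℤ => if k = 0 then (1 : ℝ) else 0) ?_)).of_nonneg_of_le
    (fun k => by split_ifs <;> positivity) fun k => ?_
  · refine (finite_singleton (0 : ℤ)).subset fun k hk => ?_
    by_contra h
    exact hk (if_neg h)
  · split_ifs with h
    · exact le_add_of_nonneg_left (by positivity)
    · simp

theorem ae_finite_near_int {m : ℕ} (b : ℝ) {s : ℝ} (hs : 1 < s) :
    ∀ᵐ x : Fin m → ℝ, {q : Fin (m + 1) → ℤ | Fin.init q ≠ 0 ∧ ∃ p : ℤ,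
      |(∑ j : Fin m, (q j.castSucc : ℝ) * x j) + q (Fin.last m) * b + p|
        < prodTimes q ^ (-s)}.Finite := by
  have hbox (N : ℕ) : ∀ᵐ x ∂(Measure.pi fun _ : Fin m =>
      (volume : Measure ℝ).restrict (Icc (-(N : ℝ)) N)),
      {q : Fin (m + 1) → ℤ | Fin.init q ≠ 0 ∧ ∃ p : ℤ,
      |(∑ j : Fin m, (q j.castSucc : ℝ) * x j) + q (Fin.last m) * b + p|
        < prodTimes q ^ (-s)}.Finite := by
    refine ae_finite_setOfPred_mem (s := fun q : Fin (m + 1) → ℤ => {x : Fin m → ℝ |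
      Fin.init q ≠ 0 ∧ ∃ p : ℤ,
      |(∑ j : Fin m, (q j.castSucc : ℝ) * x j) + q (Fin.last m) * b + p|
        < prodTimes q ^ (-s)}) ?_
    have hle (q : Fin (m + 1) → ℤ) : (Measure.pi fun _ : Fin m =>
        (volume : Measure ℝ).restrict (Icc (-(N : ℝ)) N)) {x : Fin m → ℝ |
        Fin.init q ≠ 0 ∧ ∃ p : ℤ,
        |(∑ j : Fin m, (q j.castSucc : ℝ) * x j) + q (Fin.last m) * b + p|
          < prodTimes q ^ (-s)}
        ≤ ENNReal.ofReal (4 * N + 6) * ENNReal.ofReal (2 * N) ^ (m - 1)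
          * ENNReal.ofReal (prodTimes q ^ (-s)) := by
      have h1 := one_le_prodTimes q
      by_cases hq : Fin.init q = 0
      · simp [hq]
      · refine (measure_mono fun x hx => hx.2).trans
          ((pi_restrict_near_int_le N.cast_nonneg (by positivity)
            (Real.rpow_le_one_of_one_le_of_nonpos h1 (by linarith)) hq _).trans_eq ?_)
        rw [ENNReal.ofReal_mul (by positivity)]
        ring
    refine ne_top_of_le_ne_top ?_ (ENNReal.tsum_le_tsum hle)
    rw [ENNReal.tsum_mul_left]
    exact ENNReal.mul_ne_top (by finiteness) (tsum_ofReal_prodTimes_rpow_ne_top hs _)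
  have hcover : (⋃ N : ℕ, univ.pi fun _ : Fin m => Icc (-(N : ℝ)) N) = univ := by
    refine eq_univ_of_forall fun x => mem_iUnion.2 ?_
    obtain ⟨N, hN⟩ := exists_nat_ge ‖x‖
    exact ⟨N, fun i _ => abs_le.1 ((norm_le_pi_norm x i).trans hN)⟩
  rw [← Measure.restrict_univ (μ := (volume : Measure (Fin m → ℝ))), ← hcover,
    ae_restrict_iUnion_iff]
  intro N
  rw [volume_pi, Measure.restrict_pi_pi]
  exact hbox N

theorem sum_mul_snoc {m : ℕ} (q : Fin (m + 1) → ℤ) (x : Fin m → ℝ) (b : ℝ) :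
    ∑ i, (q i : ℝ) * Fin.snoc (α := fun _ => ℝ) x b i
      = (∑ j : Fin m, (q j.castSucc : ℝ) * x j) + q (Fin.last m) * b := by
  simp [Fin.sum_univ_castSucc]

theorem prodTimes_snoc_zero {m : ℕ} {k : ℤ} (hk : k ≠ 0) :
    prodTimes (Fin.snoc (α := fun _ => ℤ) (0 : Fin m → ℤ) k) = |(k : ℝ)| := by
  simp [prodTimes, Fin.prod_univ_castSucc, hk]

theorem one_le_sigma1 (b : ℝ) : 1 ≤ sigma1 b := by
  refine le_sSup ⟨1, by simp, fun hfin => ?_⟩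
  have hev (n : ℕ) : ∃ k ∈ {q : ℤ | ∃ p : ℤ, |(q : ℝ) * b + p| < |(q : ℝ)| ^ (-(1 : ℝ))},
      0 < k ∧ ∃ p : ℤ, |(k : ℝ) * b + p| ≤ 1 / (n + 1 : ℝ) := by
    obtain ⟨j, k, hk, hkn, h⟩ := Real.exists_int_int_abs_mul_sub_le b n.succ_pos
    have hk' : (0 : ℝ) < k := by exact_mod_cast hk
    have hkn' : (k : ℝ) ≤ n + 1 := by exact_mod_cast hkn
    have h' : |(k : ℝ) * b + ((-j : ℤ) : ℝ)| ≤ 1 / ((n + 1 : ℕ) + 1 : ℝ) := by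
      simpa [sub_eq_add_neg] using h
    refine ⟨k, ⟨-j, h'.trans_lt ?_⟩, hk, -j, h'.trans ?_⟩
    · rw [abs_of_pos hk', Real.rpow_neg_one, ← one_div]
      push_cast
      exact one_div_lt_one_div_of_lt hk' (by linarith)
    · push_cast
      exact one_div_le_one_div_of_le (by positivity) (by linarith)
  obtain ⟨k, hk, hfreq⟩ : ∃ k : ℤ, 0 < k ∧
      ∃ᶠ n : ℕ in atTop, ∃ p : ℤ, |(k : ℝ) * b + p| ≤ 1 / (n + 1 : ℝ) := by
    by_contra! hcon
    have hall := (eventually_all_finite hfin).2 fun k _ =>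
      (eventually_imp_distrib_left (p := 0 < k)).2 fun hk => hcon k hk
    obtain ⟨n, hn⟩ := hall.exists
    obtain ⟨k, hkS, hk, p, hp⟩ := hev n
    exact (hn k hkS hk p).not_ge hp
  obtain ⟨p, hp⟩ : ∃ p : ℤ, (k : ℝ) * b + p = 0 := by
    refine ⟨-round ((k : ℝ) * b), ?_⟩
    by_contra hne
    have hpos : 0 < |(k : ℝ) * b + ((-round ((k : ℝ) * b) : ℤ) : ℝ)| := abs_pos.2 hne
    obtain ⟨n, ⟨p, hp⟩, hn⟩ := (hfreq.and_eventually
      (tendsto_one_div_add_atTop_nhds_zero_nat.eventually (gt_mem_nhds hpos))).exists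
    have := round_le ((k : ℝ) * b) (-p)
    push_cast at this hn
    rw [sub_neg_eq_add, sub_eq_add_neg] at this
    linarith
  refine (infinite_range_of_injective (f := fun n : ℕ => ((n : ℤ) + 1) * k) ?_) (hfin.subset ?_)
  · intro a c h
    simpa [hk.ne'] using h
  · rintro _ ⟨n, rfl⟩
    refine ⟨(n + 1) * p, ?_⟩
    have hk' : (0 : ℝ) < k := by exact_mod_cast hk
    have : (((((n : ℤ) + 1) * k : ℤ) : ℝ)) * b + (((n + 1) * p : ℤ) : ℝ) = 0 := by
      push_cast
      linear_combination ((n : ℝ) + 1) * hp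
    rw [this, abs_zero]
    push_cast
    positivity

theorem mul_sigma1_le_omegaT {m : ℕ} (x : Fin m → ℝ) (b : ℝ) :
    ((m + 1 : ℕ) : EReal) * sigma1 b
      ≤ omegaT (Fin.snoc (α := fun _ => ℝ) x b) := by
  have hm : (0 : ℝ) < ((m + 1 : ℕ) : ℝ) := by positivity
  have hm0 : (0 : EReal) < ((m + 1 : ℕ) : EReal) := by exact_mod_cast hm
  have hmt : ((m + 1 : ℕ) : EReal) ≠ ⊤ := EReal.coe_ne_top ((m + 1 : ℕ) : ℝ)
  rw [mul_comm, ← EReal.le_div_iff_mul_le hm0 hmt]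
  refine sSup_le ?_
  rintro _ ⟨v, rfl, hv⟩
  rw [EReal.le_div_iff_mul_le hm0 hmt]
  refine le_sSup ⟨v * ((m + 1 : ℕ) : ℝ), by simp, ?_⟩
  have hinj : Function.Injective
      fun k : ℤ => (Fin.snoc (α := fun _ => ℤ) (0 : Fin m → ℤ) k : Fin (m + 1) → ℤ) :=
    fun k l h => by simpa using congrFun h (Fin.last m)
  refine ((hv.sdiff (finite_singleton 0)).image hinj.injOn).mono ?_
  rintro _ ⟨k, ⟨⟨p, hp⟩, hk⟩, rfl⟩
  refine ⟨p, ?_⟩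
  rw [sum_mul_snoc, prodTimes_snoc_zero hk, mul_div_cancel_right₀ _ hm.ne']
  simpa using hp

theorem finite_of_sigma1_lt {b s : ℝ} (hs : sigma1 b < s) :
    {q : ℤ | ∃ p : ℤ, |(q : ℝ) * b + p| < |(q : ℝ)| ^ (-s)}.Finite := by
  by_contra h
  exact hs.not_ge (le_sSup ⟨s, rfl, h⟩)

theorem ae_omegaT_snoc_le {m : ℕ} (b : ℝ) {v : ℝ}
    (hv : ((m + 1 : ℕ) : EReal) * sigma1 b < v) :
    ∀ᵐ x : Fin m → ℝ, omegaT (Fin.snoc (α := fun _ => ℝ) x b) ≤ v := by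
  have hm : (0 : ℝ) < ((m + 1 : ℕ) : ℝ) := by positivity
  have hm0 : (0 : EReal) ≤ ((m + 1 : ℕ) : EReal) := by exact_mod_cast hm.le
  obtain ⟨s, rfl⟩ : ∃ s : ℝ, v = ((m + 1 : ℕ) : ℝ) * s := ⟨v / ((m + 1 : ℕ) : ℝ), by field_simp⟩
  have hσ : sigma1 b < s := by
    by_contra! h
    exact hv.not_ge (by simpa using mul_le_mul_of_nonneg_left h hm0)
  have hs : 1 < s := by exact_mod_cast (one_le_sigma1 b).trans_lt hσ
  filter_upwards [ae_finite_near_int (m := m) b hs] with x hx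
  refine sSup_le ?_
  rintro _ ⟨w, rfl, hw⟩
  by_contra! hlt
  have hlt' : s < w / ((m + 1 : ℕ) : ℝ) := by
    rw [lt_div_iff₀ hm, mul_comm]
    exact_mod_cast hlt
  refine hw ((hx.union (((finite_of_sigma1_lt hσ).insert 0).image
    fun k : ℤ => (Fin.snoc (α := fun _ => ℤ) (0 : Fin m → ℤ) k : Fin (m + 1) → ℤ))).subset ?_)
  rintro q ⟨p, hp⟩
  rw [sum_mul_snoc] at hp
  replace hp := hp.trans_le (Real.rpow_le_rpow_of_exponent_le (one_le_prodTimes q)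
    (neg_le_neg hlt'.le))
  by_cases hq : Fin.init q = 0
  · right
    obtain ⟨k, rfl⟩ : ∃ k : ℤ, Fin.snoc (α := fun _ => ℤ) (0 : Fin m → ℤ) k = q :=
      ⟨q (Fin.last m), by rw [← hq]; exact Fin.snoc_init_self q⟩
    refine ⟨k, ?_, rfl⟩
    by_cases hk : k = 0
    · exact Or.inl hk
    · rw [prodTimes_snoc_zero hk] at hp
      exact Or.inr ⟨p, by simpa using hp⟩
  · exact Or.inl ⟨hq, p, hp⟩

theorem measurableEmbedding_snoc (m : ℕ) (b : ℝ) :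
    MeasurableEmbedding fun x : Fin m → ℝ => (Fin.snoc x b : Fin (m + 1) → ℝ) := by
  refine Topology.IsClosedEmbedding.measurableEmbedding ?_
  refine Function.LeftInverse.isClosedEmbedding (f := fun y : Fin (m + 1) → ℝ => (Fin.init y : Fin m → ℝ))
    (fun x => by simp) ?_ ?_
  · exact continuous_pi fun i => continuous_apply _
  · exact Continuous.finSnoc (A := fun _ => ℝ) continuous_id continuous_const

theorem stmt4 (m : ℕ) (hm : 1 ≤ m) (b : ℝ) :
    omegaTMeas (Measure.map (fun x : Fin m → ℝ => Fin.snoc x b) volume)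
      = max (((m + 1 : ℕ) : EReal)) (((m + 1 : ℕ) : EReal) * sigma1 b) := by
  rw [max_eq_right (le_mul_of_one_le_right (Nat.cast_nonneg' _) (one_le_sigma1 b))]
  refine le_antisymm (sSup_le ?_) (EReal.ge_of_forall_gt_iff_ge.1 fun v hv => le_sSup ⟨v, rfl, ?_⟩)
  · rintro _ ⟨v, rfl, hv⟩
    by_contra! hlt
    rw [(measurableEmbedding_snoc m b).map_apply] at hv
    refine hv.ne' (measure_mono_null (fun x hx => ?_) (ae_iff.1 (ae_omegaT_snoc_le b hlt)))
    exact not_le.2 hx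
  · rw [(measurableEmbedding_snoc m b).map_apply,
      show (fun x : Fin m → ℝ => (Fin.snoc x b : Fin (m + 1) → ℝ)) ⁻¹'
        {y | (v : EReal) < omegaT y} = univ from
        eq_univ_of_forall fun x => hv.trans_le (mul_sigma1_le_omegaT x b)]
    exact Measure.measure_univ_pos.2 NeZero.out
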